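/- arXiv:1803.11026 — 2 statements merged into one kernel-verified Lean document; each statement's English description precedes it below -/
import Mathlib

section
/- The function f_β is non-negative, bounded by 1, and non-decreasing as a function of |z|: for all 0 < r₁ ≤ r₂ one has 0 ≤ f̃(r₁)/r₁ ≤ f̃(r₂)/r₂ ≤ 1. -/
/-!
The quotient `f̃ r / r` is monotone on each of three intervals and continuous where they meet.

On `(0, μ^β̃]` the function `f̃` is a multiple of `j̃`, which is convex with `j̃ 0 = 0` on
`[0, μ]` and affine with negative intercept beyond `μ`. Beyond `R_β` the quotient is `1`. On
`[μ^β̃, R_β]` put `ω² = ½ a μ^(1-3β̃)`: the solution of `u'' = -ω² u` that touches the diagonal at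
`R` is `u x = R cos t - sin t / ω` with `t = ω (R - x)`, and
`ω (x u' - u) = ωR (ωR - t) sin t + (sin t - t cos t)`
is non-negative for `0 < x ≤ R` as soon as `ωR ≤ π`. Finally `ωR` is controlled by the conserved
energy, which is `1 + (ωR)²` at `R` and at most `4 + 1/4` at `μ^β̃` when `2 μ a ≤ μ^β̃`.
-/

open Set

/-- The radial scattering data: the rescaled interaction `w_μ(r) = μ⁻² w(r/μ)` (given through its
radial profile `w`), its zero-energy scattering solution `j̃` in radial form, and for each `κ ≥ 1`
the function `f̃_κ` which equals `κ j̃` on `[0, μ^β̃]` and solves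
`f̃_κ'' = -½ a μ^(1-3β̃) f̃_κ` beyond `μ^β̃`. -/
structure ScatteringODE where
  a : ℝ
  beta : ℝ
  mu : ℝ
  w : ℝ → ℝ
  jt : ℝ → ℝ
  jt' : ℝ → ℝ
  ft : ℝ → ℝ → ℝ
  ft' : ℝ → ℝ → ℝ
  ha : 0 < a
  hbeta : beta ∈ Set.Ioo (1/3 : ℝ) 1
  hmu : mu ∈ Set.Ioo (0 : ℝ) 1
  hw_nonneg : ∀ r, 0 ≤ w r
  hw_bdd : ∃ M, ∀ r, w r ≤ M
  hw_supp : ∀ r, 1 < r → w r = 0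
  hjt_deriv : ∀ r, HasDerivAt jt (jt' r) r
  hjt_zero : jt 0 = 0
  hjt_ode : ∀ r ∈ Set.Ioo 0 mu, HasDerivAt jt' ((1/2) * (mu⁻¹ ^ 2 * w (r / mu)) * jt r) r
  hjt_lin : ∀ r, mu ≤ r → jt r = r - mu * a
  hjt_nonneg : ∀ r, 0 ≤ r → 0 ≤ jt r
  hjt_mono : MonotoneOn jt (Set.Ici 0)
  hjt_le : ∀ r, 0 ≤ r → jt r ≤ r
  hft_deriv : ∀ κ r : ℝ, HasDerivAt (ft κ) (ft' κ r) r
  hft_eq : ∀ κ : ℝ, ∀ r ∈ Set.Icc (0:ℝ) (mu ^ beta), ft κ r = κ * jt r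
  hft_ode : ∀ κ r : ℝ, mu ^ beta < r →
      HasDerivAt (ft' κ) (-(1/2) * a * mu ^ (1 - 3 * beta) * ft κ r) r

/-- A scattering setup together with the tangency parameter `κ_β ∈ (1, μ^β̃/(μ^β̃ - μa))` and the
minimal tangency radius `R_β ∈ (μ^β̃, ∞)` at which `f̃_{κ_β}` is tangent to the line `r ↦ r`. -/
structure TangentScattering extends ScatteringODE where
  hsmall : mu * a < mu ^ beta
  kappa : ℝ
  Rb : ℝ
  hkappa : kappa ∈ Set.Ioo 1 (mu ^ beta / (mu ^ beta - mu * a))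
  hRb : mu ^ beta < Rb
  htan_val : ft kappa Rb = Rb
  htan_der : ft' kappa Rb = 1
  hRb_min : ∀ R : ℝ, mu ^ beta < R → ft kappa R = R → ft' kappa R = 1 → Rb ≤ R

/-- The radial form `f̃` of the scattering solution `f_β`, extended by `f̃(r) = r` for `r ≥ R_β`. -/
noncomputable def TangentScattering.fext (S : TangentScattering) (r : ℝ) : ℝ :=
  if r < S.Rb then S.ft S.kappa r else r

lemma mul_cos_le_sin {t : ℝ} (ht₀ : 0 ≤ t) (htπ : t ≤ Real.pi) :
    t * Real.cos t ≤ Real.sin t := by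
  rcases lt_or_ge t (Real.pi / 2) with ht | ht
  · have hcos : 0 < Real.cos t := Real.cos_pos_of_mem_Ioo ⟨by linarith, ht⟩
    rw [← le_div_iff₀ hcos, ← Real.tan_eq_sin_div_cos]
    exact Real.le_tan ht₀ ht
  · have hcos : Real.cos t ≤ 0 :=
      Real.cos_nonpos_of_pi_div_two_le_of_le ht (by linarith)
    exact (mul_nonpos_of_nonneg_of_nonpos ht₀ hcos).trans
      (Real.sin_nonneg_of_nonneg_of_le_pi ht₀ htπ)

lemma monotoneOn_div_self_of_le_mul_deriv {f f' : ℝ → ℝ} {s : Set ℝ} (hs : Convex ℝ s)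
    (hs₀ : s ⊆ Ioi 0) (hf : ∀ x ∈ s, HasDerivAt f (f' x) x) (hle : ∀ x ∈ s, f x ≤ x * f' x) :
    MonotoneOn (fun x => f x / x) s := by
  have hquot : ∀ x ∈ s, HasDerivAt (fun x => f x / x) ((f' x * x - f x * 1) / x ^ 2) x :=
    fun x hx => (hf x hx).div (hasDerivAt_id' x) (hs₀ hx).ne'
  refine monotoneOn_of_hasDerivWithinAt_nonneg hs
    (fun x hx => (hquot x hx).continuousAt.continuousWithinAt)
    (fun x hx => (hquot x (interior_subset hx)).hasDerivWithinAt) fun x hx => ?_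
  have := hle x (interior_subset hx)
  exact div_nonneg (by linarith) (sq_nonneg x)

lemma monotoneOn_div_self_of_convexOn {f : ℝ → ℝ} {s : Set ℝ} (hf : ConvexOn ℝ s f)
    (hs₀ : (0 : ℝ) ∈ s) (hf₀ : f 0 = 0) : MonotoneOn (fun x => f x / x) (s \ {0}) := by
  simpa [slope_fun_def_field, hf₀] using hf.slope_mono hs₀

lemma exists_pos_forall_mul_le_rpow {β : ℝ} (hβ : β < 1) (c : ℝ) :
    ∃ μ₀ > 0, ∀ μ, 0 < μ → μ ≤ μ₀ → c * μ ≤ μ ^ β := by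
  have hlim : Filter.Tendsto (fun μ : ℝ => c * μ ^ (1 - β)) (nhdsWithin 0 (Ioi 0)) (nhds 0) := by
    have hexp : 0 < 1 - β := sub_pos.2 hβ
    simpa [Real.zero_rpow hexp.ne'] using
      ((Real.continuousAt_rpow_const 0 _ (Or.inr hexp.le)).const_mul c).tendsto.mono_left
        nhdsWithin_le_nhds
  obtain ⟨μ₀, hμ₀, hlt⟩ :=
    mem_nhdsGT_iff_exists_Ioc_subset.1 (hlim.eventually (gt_mem_nhds zero_lt_one))
  refine ⟨μ₀, hμ₀, fun μ hμ hle => ?_⟩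
  calc c * μ = c * μ ^ (1 - β) * μ ^ β := by
        rw [mul_assoc, ← Real.rpow_add hμ, sub_add_cancel, Real.rpow_one]
    _ ≤ μ ^ β := mul_le_of_le_one_left (by positivity) (hlt ⟨hμ, hle⟩).le

lemma wronskian_eq_of_hasDerivAt {𝕜 : Type*} [RCLike 𝕜] {q f f' g g' : 𝕜 → 𝕜} {s : Set 𝕜}
    (hs : IsOpen s) (hs' : IsPreconnected s)
    (hf : ∀ x ∈ s, HasDerivAt f (f' x) x) (hf' : ∀ x ∈ s, HasDerivAt f' (q x * f x) x)
    (hg : ∀ x ∈ s, HasDerivAt g (g' x) x) (hg' : ∀ x ∈ s, HasDerivAt g' (q x * g x) x)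
    {x y : 𝕜} (hx : x ∈ s) (hy : y ∈ s) :
    f x * g' x - f' x * g x = f y * g' y - f' y * g y := by
  have hW : ∀ z ∈ s, HasDerivAt (fun z => f z * g' z - f' z * g z) 0 z := fun z hz =>
    (((hf z hz).mul (hg' z hz)).sub ((hf' z hz).mul (hg z hz))).congr_deriv (by ring)
  exact hs.is_const_of_deriv_eq_zero hs'
    (fun z hz => (hW z hz).differentiableAt.differentiableWithinAt)
    (fun z hz => (hW z hz).deriv) hx hy

lemma eq_mul_cos_sub_mul_sin_of_hasDerivAt {f f' : ℝ → ℝ} {ω : ℝ} {s : Set ℝ} (hω : ω ≠ 0)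
    (hs : IsOpen s) (hs' : IsPreconnected s)
    (hf : ∀ x ∈ s, HasDerivAt f (f' x) x) (hf' : ∀ x ∈ s, HasDerivAt f' (-ω ^ 2 * f x) x)
    {x₀ x : ℝ} (hx₀ : x₀ ∈ s) (hx : x ∈ s) :
    f x = f x₀ * Real.cos (ω * (x₀ - x)) - f' x₀ * (Real.sin (ω * (x₀ - x)) / ω) := by
  have hphase : ∀ y, HasDerivAt (fun y => ω * (y - x)) ω y := fun y => by
    simpa using ((hasDerivAt_id y).sub_const x).const_mul ω
  -- `sin (ω (y - x)) / ω` is the solution vanishing at `x` with slope `1`, so its Wronskian with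
  -- `f` takes the value `f x` at `x`.
  have hwronskian := wronskian_eq_of_hasDerivAt (q := fun _ => -ω ^ 2)
    (g := fun y => Real.sin (ω * (y - x)) / ω) (g' := fun y => Real.cos (ω * (y - x)))
    hs hs' hf hf'
    (fun y _ => ((hphase y).sin.div_const ω).congr_deriv (by field_simp))
    (fun y _ => (hphase y).cos.congr_deriv (by field_simp)) hx hx₀
  simpa using hwronskian

/-- The solution of `u'' = -ω² u` with `u R = R` and `u' R = 1`, that is, the oscillation of
frequency `ω` touching the diagonal at `R`. Meaningful for `ω ≠ 0` only: at `ω = 0` the division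
by zero gives the constant `R`. -/
noncomputable def tangentOscillation (ω R x : ℝ) : ℝ :=
  R * Real.cos (ω * (R - x)) - Real.sin (ω * (R - x)) / ω

section tangentOscillation

variable {ω R x : ℝ}

lemma hasDerivAt_tangentOscillation (hω : ω ≠ 0) :
    HasDerivAt (tangentOscillation ω R)
      (ω * R * Real.sin (ω * (R - x)) + Real.cos (ω * (R - x))) x := by
  have hphase : HasDerivAt (fun x => ω * (R - x)) (-ω) x := by
    simpa using ((hasDerivAt_id x).const_sub R).const_mul ω
  exact ((hphase.cos.const_mul R).sub (hphase.sin.div_const ω)).congr_deriv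
    (by field_simp; ring)

lemma tangentOscillation_energy (hω : ω ≠ 0) :
    deriv (tangentOscillation ω R) x ^ 2 + (ω * tangentOscillation ω R x) ^ 2
      = 1 + (ω * R) ^ 2 := by
  have hscale : ω * tangentOscillation ω R x
      = ω * R * Real.cos (ω * (R - x)) - Real.sin (ω * (R - x)) := by
    unfold tangentOscillation
    field_simp
  rw [(hasDerivAt_tangentOscillation hω).deriv, hscale]
  linear_combination (1 + (ω * R) ^ 2) * Real.sin_sq_add_cos_sq (ω * (R - x))

lemma tangentOscillation_le_mul_deriv (hω : 0 < ω) (hωR : ω * R ≤ Real.pi) (hx : x ∈ Ioc 0 R) :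
    tangentOscillation ω R x ≤ x * deriv (tangentOscillation ω R) x := by
  rw [(hasDerivAt_tangentOscillation hω.ne').deriv, tangentOscillation]
  have hωx : 0 < ω * x := mul_pos hω hx.1
  have ht₀ : 0 ≤ ω * (R - x) := mul_nonneg hω.le (sub_nonneg.2 hx.2)
  have htπ : ω * (R - x) ≤ Real.pi := by linarith
  have hR : 0 < R := hx.1.trans_le hx.2
  have hsin := Real.sin_nonneg_of_nonneg_of_le_pi ht₀ htπ
  have hcos := mul_cos_le_sin ht₀ htπ
  generalize Real.sin (ω * (R - x)) = S at *
  generalize Real.cos (ω * (R - x)) = C at *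
  have hident : x * (ω * R * S + C) - (R * C - S / ω)
      = x * (ω * R) * S + (S - ω * (R - x) * C) / ω := by
    field_simp
    ring
  have hfirst : 0 ≤ x * (ω * R) * S := mul_nonneg (mul_pos hx.1 (mul_pos hω hR)).le hsin
  have hsecond : 0 ≤ (S - ω * (R - x) * C) / ω := div_nonneg (sub_nonneg.2 hcos) hω.le
  linarith

lemma monotoneOn_tangentOscillation_div_self (hω : 0 < ω) (hωR : ω * R ≤ Real.pi) :
    MonotoneOn (fun x => tangentOscillation ω R x / x) (Ioc 0 R) :=
  monotoneOn_div_self_of_le_mul_deriv (convex_Ioc 0 R) (fun _ hx => hx.1)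
    (fun _ _ => (hasDerivAt_tangentOscillation hω.ne').differentiableAt.hasDerivAt)
    fun _ => tangentOscillation_le_mul_deriv hω hωR

end tangentOscillation

namespace ScatteringODE

/-- The frequency `ω` of the oscillator equation `f̃_κ'' = -ω² f̃_κ` solved beyond `μ^β̃`, so that
`ω² = ½ a μ^(1-3β̃)`. -/
noncomputable def freq (S : ScatteringODE) : ℝ :=
  √(1 / 2 * S.a * S.mu ^ (1 - 3 * S.beta))

/-- The function `f̃_κ` continued by the diagonal from the radius `R` on; the `f̃` of the paper is
the case `κ = κ_β`, `R = R_β`. -/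
noncomputable def diagonalExt (S : ScatteringODE) (κ R r : ℝ) : ℝ :=
  if r < R then S.ft κ r else r

variable (S : ScatteringODE) {κ R : ℝ}

lemma rpow_beta_pos : 0 < S.mu ^ S.beta :=
  Real.rpow_pos_of_pos S.hmu.1 _

lemma mu_lt_rpow_beta : S.mu < S.mu ^ S.beta :=
  Real.self_lt_rpow_of_lt_one S.hmu.1 S.hmu.2 S.hbeta.2

lemma freq_pos : 0 < S.freq :=
  Real.sqrt_pos.2 (mul_pos (mul_pos one_half_pos S.ha) (Real.rpow_pos_of_pos S.hmu.1 _))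

lemma freq_sq : S.freq ^ 2 = 1 / 2 * S.a * S.mu ^ (1 - 3 * S.beta) :=
  Real.sq_sqrt (Real.sqrt_pos.1 S.freq_pos).le

lemma freq_sq_mul_rpow_beta_cube :
    S.freq ^ 2 * (S.mu ^ S.beta) ^ 3 = S.mu * S.a / 2 := by
  have hpow : S.mu ^ (1 - 3 * S.beta) * (S.mu ^ S.beta) ^ 3 = S.mu := by
    rw [← Real.rpow_mul_natCast S.hmu.1.le, ← Real.rpow_add S.hmu.1]
    norm_num [mul_comm]
  rw [freq_sq, mul_assoc, hpow]
  ring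

lemma convexOn_jt : ConvexOn ℝ (Icc 0 S.mu) S.jt := by
  refine convexOn_of_hasDerivWithinAt2_nonneg (convex_Icc 0 S.mu)
    (fun x _ => (S.hjt_deriv x).continuousAt.continuousWithinAt)
    (fun x _ => (S.hjt_deriv x).hasDerivWithinAt)
    (fun x hx => (S.hjt_ode x (by simpa using hx)).hasDerivWithinAt) fun x hx => ?_
  have := S.hjt_nonneg x (interior_subset hx).1
  have := S.hw_nonneg (x / S.mu)
  positivity

lemma monotoneOn_jt_div_self : MonotoneOn (fun r => S.jt r / r) (Ioi 0) := by
  have hmu := S.hmu.1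
  have hinner : MonotoneOn (fun r => S.jt r / r) (Ioc 0 S.mu) :=
    (monotoneOn_div_self_of_convexOn S.convexOn_jt (left_mem_Icc.2 hmu.le) S.hjt_zero).mono
      fun r hr => ⟨Ioc_subset_Icc_self hr, hr.1.ne'⟩
  have houter : MonotoneOn (fun r => S.jt r / r) (Ici S.mu) := fun r hr s hs hrs => by
    have hr₀ := hmu.trans_le hr
    have hs₀ := hmu.trans_le hs
    simp only [S.hjt_lin r hr, S.hjt_lin s hs, sub_div, div_self hr₀.ne', div_self hs₀.ne']
    have := (mul_pos hmu S.ha).le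
    gcongr
  simpa [Ioc_union_Ici_eq_Ioi hmu] using
    hinner.union_right houter (isGreatest_Ioc hmu) isLeast_Ici

lemma ft_eq_affine {r : ℝ} (hr : r ∈ Icc S.mu (S.mu ^ S.beta)) :
    S.ft κ r = κ * (r - S.mu * S.a) := by
  rw [S.hft_eq κ r ⟨S.hmu.1.le.trans hr.1, hr.2⟩, S.hjt_lin r hr.1]

lemma ft'_rpow_beta : S.ft' κ (S.mu ^ S.beta) = κ := by
  have hb := right_mem_Icc.2 S.mu_lt_rpow_beta.le
  have haffine : HasDerivAt (fun r => κ * (r - S.mu * S.a)) κ (S.mu ^ S.beta) := by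
    simpa using ((hasDerivAt_id _).sub_const (S.mu * S.a)).const_mul κ
  exact (uniqueDiffOn_Icc S.mu_lt_rpow_beta _ hb).eq_deriv _ (S.hft_deriv κ _).hasDerivWithinAt
    (haffine.hasDerivWithinAt.congr (fun r hr => S.ft_eq_affine hr) (S.ft_eq_affine hb))

lemma eqOn_ft_tangentOscillation (hR : S.mu ^ S.beta < R) (hval : S.ft κ R = R)
    (hder : S.ft' κ R = 1) :
    EqOn (S.ft κ) (tangentOscillation S.freq R) (Ici (S.mu ^ S.beta)) := by
  have hIoi : EqOn (S.ft κ) (tangentOscillation S.freq R) (Ioi (S.mu ^ S.beta)) := fun r hr => by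
    have hode : ∀ x ∈ Ioi (S.mu ^ S.beta),
        HasDerivAt (S.ft' κ) (-S.freq ^ 2 * S.ft κ x) x := fun x hx =>
      (S.hft_ode κ x hx).congr_deriv (by rw [freq_sq]; ring)
    have hrep := eq_mul_cos_sub_mul_sin_of_hasDerivAt S.freq_pos.ne' isOpen_Ioi isPreconnected_Ioi
      (fun x _ => S.hft_deriv κ x) hode hR hr
    rwa [hval, hder, one_mul] at hrep
  exact hIoi.of_subset_closure
    (fun x _ => (S.hft_deriv κ x).continuousAt.continuousWithinAt)
    (fun x _ => (hasDerivAt_tangentOscillation S.freq_pos.ne').continuousAt.continuousWithinAt)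
    Ioi_subset_Ici_self (closure_Ioi _).ge

lemma energy_at_rpow_beta (hR : S.mu ^ S.beta < R) (hval : S.ft κ R = R)
    (hder : S.ft' κ R = 1) :
    κ ^ 2 + (S.freq * (κ * (S.mu ^ S.beta - S.mu * S.a))) ^ 2 = 1 + (S.freq * R) ^ 2 := by
  have hω := S.freq_pos.ne'
  have hEq := S.eqOn_ft_tangentOscillation hR hval hder
  have hderiv : deriv (tangentOscillation S.freq R) (S.mu ^ S.beta) = κ := by
    rw [← S.ft'_rpow_beta (κ := κ)]
    exact (uniqueDiffOn_Ici _ _ self_mem_Ici).eq_deriv _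
      ((hasDerivAt_tangentOscillation hω).differentiableAt.hasDerivAt.hasDerivWithinAt.congr
        hEq (hEq self_mem_Ici)) (S.hft_deriv κ _).hasDerivWithinAt
  rw [← tangentOscillation_energy (x := S.mu ^ S.beta) hω, hderiv, ← hEq self_mem_Ici,
    S.ft_eq_affine (right_mem_Icc.2 S.mu_lt_rpow_beta.le)]

lemma freq_mul_le_pi (hsmall : 2 * (S.mu * S.a) ≤ S.mu ^ S.beta) (hκ : 0 ≤ κ)
    (hκb : κ * (S.mu ^ S.beta - S.mu * S.a) ≤ S.mu ^ S.beta) (hR : S.mu ^ S.beta < R)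
    (hval : S.ft κ R = R) (hder : S.ft' κ R = 1) : S.freq * R ≤ Real.pi := by
  have henergy := S.energy_at_rpow_beta hR hval hder
  have hcube := S.freq_sq_mul_rpow_beta_cube
  have hb := S.rpow_beta_pos
  have hω := S.freq_pos
  have hdiff : S.mu ^ S.beta / 2 ≤ S.mu ^ S.beta - S.mu * S.a := by linarith
  generalize S.mu ^ S.beta = b at *
  have hκ₂ : κ ≤ 2 := le_of_mul_le_mul_right
    (show κ * (b / 2) ≤ 2 * (b / 2) by linarith [mul_le_mul_of_nonneg_left hdiff hκ])
    (half_pos hb)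
  have hωb : (S.freq * b) ^ 2 ≤ 1 / 4 := le_of_mul_le_mul_right
    (show (S.freq * b) ^ 2 * b ≤ 1 / 4 * b by linarith) hb
  have hpotential : (S.freq * (κ * (b - S.mu * S.a))) ^ 2 ≤ (S.freq * b) ^ 2 := by
    have : 0 ≤ b - S.mu * S.a := (half_pos hb).le.trans hdiff
    gcongr
  have hkinetic : κ ^ 2 ≤ 2 ^ 2 := by gcongr
  have hωR : S.freq * R ≤ 3 := le_of_abs_le (abs_le_of_sq_le_sq (by linarith) (by norm_num))
  exact hωR.trans Real.pi_gt_three.le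

lemma monotoneOn_ft_div_self (hκ : 0 ≤ κ) (hR : S.mu ^ S.beta < R) (hval : S.ft κ R = R)
    (hder : S.ft' κ R = 1) (hωR : S.freq * R ≤ Real.pi) :
    MonotoneOn (fun r => S.ft κ r / r) (Ioc 0 R) := by
  have hb := S.rpow_beta_pos
  have hinner : MonotoneOn (fun r => S.ft κ r / r) (Ioc 0 (S.mu ^ S.beta)) :=
    fun r hr s hs hrs => by
      simp only [S.hft_eq κ r (Ioc_subset_Icc_self hr), S.hft_eq κ s (Ioc_subset_Icc_self hs),
        mul_div_assoc]
      exact mul_le_mul_of_nonneg_left (S.monotoneOn_jt_div_self hr.1 hs.1 hrs) hκ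
  have houter : MonotoneOn (fun r => S.ft κ r / r) (Icc (S.mu ^ S.beta) R) :=
    ((monotoneOn_tangentOscillation_div_self S.freq_pos hωR).mono
        fun r hr => ⟨hb.trans_le hr.1, hr.2⟩).congr fun r hr => by
      simp only [S.eqOn_ft_tangentOscillation hR hval hder hr.1]
  simpa [Ioc_union_Icc_eq_Ioc hb hR.le] using
    hinner.union_right houter (isGreatest_Ioc hb) (isLeast_Icc hR.le)

lemma monotoneOn_diagonalExt_div_self (hκ : 0 ≤ κ) (hR : S.mu ^ S.beta < R) (hval : S.ft κ R = R)
    (hder : S.ft' κ R = 1) (hωR : S.freq * R ≤ Real.pi) :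
    MonotoneOn (fun r => S.diagonalExt κ R r / r) (Ioi 0) := by
  have hR₀ := S.rpow_beta_pos.trans hR
  have hinner : MonotoneOn (fun r => S.diagonalExt κ R r / r) (Ioc 0 R) :=
    (S.monotoneOn_ft_div_self hκ hR hval hder hωR).congr fun r hr => by
      rcases hr.2.lt_or_eq with h | rfl
      · simp [diagonalExt, h]
      · simp [diagonalExt, hval]
  have houter : MonotoneOn (fun r => S.diagonalExt κ R r / r) (Ici R) :=
    (monotoneOn_const (c := 1)).congr fun r hr => by
      simp only [diagonalExt, if_neg (not_lt.2 (mem_Ici.1 hr)), div_self (hR₀.trans_le hr).ne']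
  simpa [Ioc_union_Ici_eq_Ioi hR₀] using
    hinner.union_right houter (isGreatest_Ioc hR₀) isLeast_Ici

end ScatteringODE

theorem fbeta_nonneg_monotone_le_one_general (S : ScatteringODE) {κ R : ℝ}
    (hsmall : 2 * (S.mu * S.a) ≤ S.mu ^ S.beta) (hκ : 0 ≤ κ)
    (hκb : κ * (S.mu ^ S.beta - S.mu * S.a) ≤ S.mu ^ S.beta) (hR : S.mu ^ S.beta < R)
    (hval : S.ft κ R = R) (hder : S.ft' κ R = 1) {r₁ r₂ : ℝ} (hr₁ : 0 < r₁) (hr : r₁ ≤ r₂) :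
    0 ≤ S.diagonalExt κ R r₁ / r₁ ∧
      S.diagonalExt κ R r₁ / r₁ ≤ S.diagonalExt κ R r₂ / r₂ ∧
      S.diagonalExt κ R r₂ / r₂ ≤ 1 := by
  have hmono := S.monotoneOn_diagonalExt_div_self hκ hR hval hder
    (S.freq_mul_le_pi hsmall hκ hκb hR hval hder)
  have hr₂ : 0 < r₂ := hr₁.trans_le hr
  refine ⟨?_, hmono hr₁ hr₂ hr, ?_⟩
  · have hs₀ : 0 < min r₁ (S.mu ^ S.beta) := lt_min hr₁ S.rpow_beta_pos
    refine le_trans ?_ (hmono hs₀ hr₁ (min_le_left _ _))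
    have hsR : min r₁ (S.mu ^ S.beta) < R := (min_le_right _ _).trans_lt hR
    simp only [ScatteringODE.diagonalExt, if_pos hsR, S.hft_eq κ _ ⟨hs₀.le, min_le_right _ _⟩]
    exact div_nonneg (mul_nonneg hκ (S.hjt_nonneg _ hs₀.le)) hs₀.le
  · have hM : 0 < max r₂ R := hr₂.trans_le (le_max_left _ _)
    refine (hmono hr₂ hM (le_max_left _ _)).trans_eq ?_
    simp only [ScatteringODE.diagonalExt, if_neg (le_max_right r₂ R).not_gt, div_self hM.ne']

/-- The function `f_β(z) = f̃(|z|)/|z|` is non-negative, bounded by `1`, and non-decreasing in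
`|z|`: for all `0 < r₁ ≤ r₂` one has `0 ≤ f̃(r₁)/r₁ ≤ f̃(r₂)/r₂ ≤ 1`. -/
theorem fbeta_nonneg_monotone_le_one (a beta : ℝ) (ha : 0 < a)
    (hbeta : beta ∈ Set.Ioo (1/3 : ℝ) 1) :
    ∃ μ₀ > (0:ℝ), ∀ S : TangentScattering, S.a = a → S.beta = beta → S.mu ≤ μ₀ →
      ∀ r₁ r₂ : ℝ, 0 < r₁ → r₁ ≤ r₂ →
        0 ≤ S.fext r₁ / r₁ ∧ S.fext r₁ / r₁ ≤ S.fext r₂ / r₂ ∧ S.fext r₂ / r₂ ≤ 1 := by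
  obtain ⟨μ₀, hμ₀, hsmall⟩ := exists_pos_forall_mul_le_rpow hbeta.2 (2 * a)
  refine ⟨μ₀, hμ₀, ?_⟩
  rintro S rfl rfl hmu r₁ r₂ hr₁ hr
  have hκ : 0 < S.kappa := zero_lt_one.trans S.hkappa.1
  have hκb : S.kappa * (S.mu ^ S.beta - S.mu * S.a) < S.mu ^ S.beta :=
    (lt_div_iff₀ (sub_pos.2 S.hsmall)).1 S.hkappa.2
  exact fbeta_nonneg_monotone_le_one_general S.toScatteringODE
    (by linarith [hsmall S.mu S.hmu.1 hmu]) hκ.le hκb.le S.hRb S.htan_val S.htan_der hr₁ hr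
end

section
/- There is a universal constant C such that for every integer N ≥ 2, every ε ∈ (0,1], every R > 0 and every ψ ∈ C_c^∞((ℝ³)^N; ℂ): ∫ 1_{{|z₁ − z₂| ≤ R}} |ψ|² dz ≤ C R² ε^{−4/3} ( ‖∂_{x₁} ψ‖² + ε² ‖∇_{y₁} ψ‖² ). -/
open MeasureTheory

/-!
In dimension `n`, the Sobolev inequality followed by Hölder's inequality on a ball of radius `R`
gives `‖f‖_{L²(B_R)} ≤ C R ‖∇f‖`. Only the Sobolev step is performed in the stretched coordinates
`f ∘ A`, so that the ball is not deformed: this replaces `∇f` by `∇f ∘ A` at the cost of a factor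
`|det A|^(-1/n)`. With `n = 3` and `A (x, y) = (x, ε y)` the squared factor is `ε^(-4/3)`, and
`‖∇f ∘ A‖² ≤ ‖∂ₓf‖² + ε² ‖∇_y f‖²`.

When `z₂, …, z_N` are fixed, `|z₁ - z₂| ≤ R` says that `z₁` lies in the ball of radius `R` about
`z₂`. It remains to integrate the estimate for `f = ψ(·, z₂, …, z_N)` over `z₂, …, z_N`.
-/

open Module Metric
open scoped ENNReal NNReal

section LpNorm

lemma eLpNorm_two_toReal_sq {α F : Type*} [MeasurableSpace α] [NormedAddCommGroup F]
    {μ : Measure α} {f : α → F} (hf : AEStronglyMeasurable f μ) :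
    (eLpNorm f 2 μ).toReal ^ 2 = ∫ x, ‖f x‖ ^ 2 ∂μ := by
  have h_nonneg : 0 ≤ ∫ x, ‖f x‖ ^ 2 ∂μ := integral_nonneg fun _ => sq_nonneg _
  rw [toReal_eLpNorm hf, lpNorm_eq_integral_norm_rpow_toReal two_ne_zero ENNReal.ofNat_ne_top hf]
  simp only [ENNReal.toReal_ofNat, Real.rpow_ofNat]
  exact Real.rpow_inv_natCast_pow h_nonneg two_ne_zero

lemma integral_norm_sq_le_of_eLpNorm_two_le {α β F G : Type*} [MeasurableSpace α]
    [MeasurableSpace β] [NormedAddCommGroup F] [NormedAddCommGroup G] {μ : Measure α}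
    {ν : Measure β} {f : α → F} {g : β → G} (hf : AEStronglyMeasurable f μ) (hg : MemLp g 2 ν)
    {c : ℝ} (hc : 0 ≤ c) (h : eLpNorm f 2 μ ≤ ENNReal.ofReal c * eLpNorm g 2 ν) :
    ∫ x, ‖f x‖ ^ 2 ∂μ ≤ c ^ 2 * ∫ x, ‖g x‖ ^ 2 ∂ν := by
  have h_real := ENNReal.toReal_mono (ENNReal.mul_ne_top ENNReal.ofReal_ne_top hg.eLpNorm_ne_top) h
  rw [ENNReal.toReal_mul, ENNReal.toReal_ofReal hc] at h_real
  rw [← eLpNorm_two_toReal_sq hf, ← eLpNorm_two_toReal_sq hg.1, ← mul_pow]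
  exact pow_le_pow_left₀ ENNReal.toReal_nonneg h_real 2

lemma eLpNorm_le_of_eLpNorm_update_le {ι F G : Type*} [Fintype ι] [DecidableEq ι]
    {X : ι → Type*} [∀ i, MeasurableSpace (X i)] {μ : ∀ i, Measure (X i)} [∀ i, SigmaFinite (μ i)]
    [NormedAddCommGroup F] [NormedAddCommGroup G] {f : (∀ i, X i) → F} {g : (∀ i, X i) → G}
    (hf : StronglyMeasurable f) (hg : StronglyMeasurable g) {p : ℝ≥0} (hp : p ≠ 0)
    (i : ι) (c : ℝ≥0∞)
    (h : ∀ z, eLpNorm (fun u => f (Function.update z i u)) p (μ i) ≤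
      c * eLpNorm (fun u => g (Function.update z i u)) p (μ i)) :
    eLpNorm f p (.pi μ) ≤ c * eLpNorm g p (.pi μ) := by
  have hp_pos : (0 : ℝ) < p := NNReal.coe_pos.2 (pos_iff_ne_zero.2 hp)
  have hg_meas : Measurable fun z => ‖g z‖ₑ ^ (p : ℝ) := hg.enorm.pow_const _
  rw [← ENNReal.rpow_le_rpow_iff hp_pos, ENNReal.mul_rpow_of_nonneg _ _ hp_pos.le,
    eLpNorm_nnreal_pow_eq_lintegral hp, eLpNorm_nnreal_pow_eq_lintegral hp,
    ← lintegral_const_mul _ hg_meas]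
  refine lintegral_le_of_lmarginal_le {i} (hf.enorm.pow_const _) (hg_meas.const_mul _) fun z => ?_
  have h_slice := ENNReal.rpow_le_rpow (h z) hp_pos.le
  rw [ENNReal.mul_rpow_of_nonneg _ _ hp_pos.le, eLpNorm_nnreal_pow_eq_lintegral hp,
    eLpNorm_nnreal_pow_eq_lintegral hp] at h_slice
  have hg_slice : Measurable fun u => ‖g (Function.update z i u)‖ₑ ^ (p : ℝ) :=
    hg_meas.comp (measurable_update z)
  simpa only [lmarginal_singleton, lintegral_const_mul _ hg_slice] using h_slice

lemma memLp_clm_apply {α E F : Type*} [MeasurableSpace α] [NormedAddCommGroup E] [NormedSpace ℝ E]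
    [NormedAddCommGroup F] [NormedSpace ℝ F] {ν : Measure α} {p : ℝ≥0∞} {G : α → E →L[ℝ] F}
    (hG : MemLp G p ν) (e : E) : MemLp (fun x => G x e) p ν :=
  (ContinuousLinearMap.apply ℝ F e).comp_memLp' hG

end LpNorm

section Sobolev

variable {E F : Type*} [NormedAddCommGroup E] [NormedSpace ℝ E] [FiniteDimensional ℝ E]
  [MeasurableSpace E] [BorelSpace E] (μ : Measure E) [μ.IsAddHaarMeasure]

lemma eLpNorm_comp_continuousLinearMap [NormedAddCommGroup F] (f : E → F) (p : ℝ≥0∞)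
    {A : E →L[ℝ] E} (hA : A.det ≠ 0) :
    eLpNorm (f ∘ A) p μ = ENNReal.ofReal (|A.det| ^ (-p.toReal⁻¹)) * eLpNorm f p μ := by
  have h_emb : MeasurableEmbedding A :=
    (A.toContinuousLinearEquivOfDetNeZero hA).toHomeomorph.measurableEmbedding
  have h_map : μ.map A = ENNReal.ofReal |A.det⁻¹| • μ :=
    Measure.map_linearMap_addHaar_eq_smul_addHaar μ hA
  rw [← h_emb.eLpNorm_map_measure, h_map, eLpNorm_smul_measure_of_ne_zero (by simpa using hA),
    ENNReal.ofReal_rpow_of_pos (by positivity), smul_eq_mul, abs_inv, one_div, ENNReal.toReal_inv,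
    Real.inv_rpow (abs_nonneg _), Real.rpow_neg (abs_nonneg _)]

lemma eLpNorm_closedBall_le [NormedAddCommGroup F] {f : E → F} (hf : AEStronglyMeasurable f μ)
    {p p' : ℝ≥0} (hpp' : p ≤ p') (hn : 0 < finrank ℝ E)
    (hp' : (p' : ℝ)⁻¹ = (p : ℝ)⁻¹ - (finrank ℝ E : ℝ)⁻¹) (a : E) {R : ℝ} (hR : 0 ≤ R) :
    eLpNorm f p (μ.restrict (closedBall a R)) ≤
      ENNReal.ofReal (μ.real (ball 0 1) ^ (finrank ℝ E : ℝ)⁻¹ * R) * eLpNorm f p' μ := by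
  have h_vol : μ (closedBall a R) ^ (1 / (p : ℝ) - 1 / (p' : ℝ)) =
      ENNReal.ofReal (μ.real (ball 0 1) ^ (finrank ℝ E : ℝ)⁻¹ * R) := by
    rw [one_div, one_div, hp', sub_sub_cancel, ← ofReal_measureReal measure_closedBall_lt_top.ne,
      ENNReal.ofReal_rpow_of_nonneg measureReal_nonneg (by positivity),
      Measure.addHaar_real_closedBall _ _ hR, Real.mul_rpow (by positivity) measureReal_nonneg,
      Real.pow_rpow_inv_natCast hR hn.ne', mul_comm]
  calc eLpNorm f p (μ.restrict (closedBall a R))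
      ≤ eLpNorm f p' (μ.restrict (closedBall a R)) *
          μ (closedBall a R) ^ (1 / (p : ℝ) - 1 / (p' : ℝ)) := by
        simpa using eLpNorm_le_eLpNorm_mul_rpow_measure_univ
          (ENNReal.coe_le_coe.2 hpp') (hf.restrict (s := closedBall a R))
    _ ≤ _ := by
        rw [h_vol, mul_comm]
        gcongr
        exact Measure.restrict_le_self

variable [NormedAddCommGroup F] [InnerProductSpace ℝ F]

lemma eLpNorm_le_eLpNorm_fderiv_comp_of_eq_inner {f : E → F} (hf : ContDiff ℝ 1 f)
    (hfc : HasCompactSupport f) {p p' : ℝ≥0} (hp : 1 ≤ p) (hn : 0 < finrank ℝ E)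
    (hp' : (p' : ℝ)⁻¹ = (p : ℝ)⁻¹ - (finrank ℝ E : ℝ)⁻¹) {A : E →L[ℝ] E} (hA : A.det ≠ 0) :
    eLpNorm f p' μ ≤
      ENNReal.ofReal (eLpNormLESNormFDerivOfEqInnerConst μ p *
        |A.det| ^ (-(finrank ℝ E : ℝ)⁻¹)) * eLpNorm (fun u => fderiv ℝ f u ∘L A) p μ := by
  have hd : 0 < |A.det| := abs_pos.2 hA
  have h_fderiv : fderiv ℝ (f ∘ A) = (fun u => fderiv ℝ f u ∘L A) ∘ A := by
    ext1 u
    exact ((hf.differentiable one_ne_zero _).hasFDerivAt.comp u A.hasFDerivAt).fderiv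
  have h_sobolev := eLpNorm_le_eLpNorm_fderiv_of_eq_inner μ (hf.comp A.contDiff)
    (hfc.comp_homeomorph (A.toContinuousLinearEquivOfDetNeZero hA).toHomeomorph) hp hn
    (by simpa using hp')
  rw [h_fderiv, eLpNorm_comp_continuousLinearMap μ _ _ hA,
    eLpNorm_comp_continuousLinearMap μ _ _ hA, ENNReal.coe_toReal, ENNReal.coe_toReal] at h_sobolev
  calc eLpNorm f p' μ
      = ENNReal.ofReal (|A.det| ^ (p' : ℝ)⁻¹) *
          (ENNReal.ofReal (|A.det| ^ (-(p' : ℝ)⁻¹)) * eLpNorm f p' μ) := by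
        rw [← mul_assoc, ← ENNReal.ofReal_mul (by positivity), ← Real.rpow_add hd, add_neg_cancel,
          Real.rpow_zero, ENNReal.ofReal_one, one_mul]
    _ ≤ ENNReal.ofReal (|A.det| ^ (p' : ℝ)⁻¹) * (eLpNormLESNormFDerivOfEqInnerConst μ p *
          (ENNReal.ofReal (|A.det| ^ (-(p : ℝ)⁻¹)) *
            eLpNorm (fun u => fderiv ℝ f u ∘L A) p μ)) := by
        gcongr
    _ = _ := by
        have h_exp : -(finrank ℝ E : ℝ)⁻¹ = (p' : ℝ)⁻¹ + -(p : ℝ)⁻¹ := by rw [hp']; ring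
        rw [h_exp, Real.rpow_add hd, ENNReal.ofReal_mul (by positivity),
          ENNReal.ofReal_mul (by positivity), ENNReal.ofReal_coe_nnreal]
        ring

/-- The factor in `eLpNorm_closedBall_le_eLpNorm_fderiv_comp`, up to the dependence on the radius
and on the linear map: the Sobolev constant from the Sobolev inequality with exponent `p`, times
the `n`-th root of the volume of the unit ball from Hölder's inequality, `n` being the dimension. -/
noncomputable def ballSobolevConst (p : ℝ) : ℝ :=
  eLpNormLESNormFDerivOfEqInnerConst μ p * μ.real (ball 0 1) ^ (finrank ℝ E : ℝ)⁻¹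

lemma ballSobolevConst_nonneg (p : ℝ) : 0 ≤ ballSobolevConst μ p := by
  unfold ballSobolevConst
  positivity

lemma eLpNorm_closedBall_le_eLpNorm_fderiv_comp {f : E → F} (hf : ContDiff ℝ 1 f)
    (hfc : HasCompactSupport f) {p : ℝ≥0} (hp : 1 ≤ p) (hpn : p < finrank ℝ E)
    {A : E →L[ℝ] E} (hA : A.det ≠ 0) (a : E) {R : ℝ} (hR : 0 ≤ R) :
    eLpNorm f p (μ.restrict (closedBall a R)) ≤
      ENNReal.ofReal (ballSobolevConst μ p * R * |A.det| ^ (-(finrank ℝ E : ℝ)⁻¹)) *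
        eLpNorm (fun u => fderiv ℝ f u ∘L A) p μ := by
  have hp_pos : 0 < p := zero_lt_one.trans_le hp
  have hn : 0 < finrank ℝ E := by exact_mod_cast hp_pos.trans hpn
  have h_inv_lt : (finrank ℝ E : ℝ≥0)⁻¹ < p⁻¹ := inv_strictAnti₀ hp_pos hpn
  obtain ⟨p', hp'⟩ : ∃ p' : ℝ≥0, p'⁻¹ = p⁻¹ - (finrank ℝ E : ℝ≥0)⁻¹ := ⟨_, inv_inv _⟩
  have hp'_real : (p' : ℝ)⁻¹ = (p : ℝ)⁻¹ - (finrank ℝ E : ℝ)⁻¹ := by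
    rw [← NNReal.coe_inv, hp', NNReal.coe_sub h_inv_lt.le]
    simp
  have hpp' : p ≤ p' := by
    have h_pos : 0 < p'⁻¹ := hp' ▸ tsub_pos_of_lt h_inv_lt
    exact (inv_le_inv₀ (inv_pos.1 h_pos) hp_pos).1 (hp' ▸ tsub_le_self)
  calc eLpNorm f p (μ.restrict (closedBall a R))
      ≤ ENNReal.ofReal (μ.real (ball 0 1) ^ (finrank ℝ E : ℝ)⁻¹ * R) * eLpNorm f p' μ :=
        eLpNorm_closedBall_le μ hf.continuous.aestronglyMeasurable hpp' hn hp'_real a hR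
    _ ≤ ENNReal.ofReal (μ.real (ball 0 1) ^ (finrank ℝ E : ℝ)⁻¹ * R) *
          (ENNReal.ofReal (eLpNormLESNormFDerivOfEqInnerConst μ p *
            |A.det| ^ (-(finrank ℝ E : ℝ)⁻¹)) * eLpNorm (fun u => fderiv ℝ f u ∘L A) p μ) := by
        gcongr
        exact eLpNorm_le_eLpNorm_fderiv_comp_of_eq_inner μ hf hfc hp hn hp'_real hA
    _ = _ := by
        rw [← mul_assoc, ← ENNReal.ofReal_mul (by positivity), ballSobolevConst]
        ring_nf

end Sobolev

section Diagonal

lemma opNorm_sq_le_sum_orthonormalBasis {κ E F : Type*} [Fintype κ] [NormedAddCommGroup E]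
    [InnerProductSpace ℝ E] [NormedAddCommGroup F] [NormedSpace ℝ F] (b : OrthonormalBasis κ ℝ E)
    (L : E →L[ℝ] F) : ‖L‖ ^ 2 ≤ ∑ k, ‖L (b k)‖ ^ 2 := by
  rw [← Real.le_sqrt (norm_nonneg _) (by positivity)]
  refine L.opNorm_le_bound (Real.sqrt_nonneg _) fun v => ?_
  calc ‖L v‖ = ‖∑ k, b.repr v k • L (b k)‖ := by
        conv_lhs => rw [← b.sum_repr v]
        simp only [map_sum, map_smul]
    _ ≤ ∑ k, ‖L (b k)‖ * ‖b.repr v k‖ := by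
        refine (norm_sum_le _ _).trans_eq ?_
        simp only [norm_smul, mul_comm]
    _ ≤ √(∑ k, ‖L (b k)‖ ^ 2) * √(∑ k, ‖b.repr v k‖ ^ 2) := Real.sum_mul_le_sqrt_mul_sqrt _ _ _
    _ = √(∑ k, ‖L (b k)‖ ^ 2) * ‖v‖ := by rw [← EuclideanSpace.norm_eq, b.repr.norm_map]

variable {κ : Type*} [Fintype κ] [DecidableEq κ]

lemma det_toEuclideanCLM (M : Matrix κ κ ℝ) :
    (Matrix.toEuclideanCLM (𝕜 := ℝ) M).det = M.det := by
  rw [ContinuousLinearMap.det, Matrix.coe_toEuclideanCLM_eq_toEuclideanLin,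
    Matrix.toEuclideanLin, Matrix.toLpLin_eq_toLin, LinearMap.det_toLin]

lemma toEuclideanCLM_diagonal_single (w : κ → ℝ) (k : κ) :
    Matrix.toEuclideanCLM (𝕜 := ℝ) (Matrix.diagonal w) (EuclideanSpace.single k 1) =
      w k • EuclideanSpace.single k 1 := by
  ext l
  simp [Pi.single_apply]

lemma integral_comp_toEuclideanCLM_diagonal_sq_le {α F : Type*} [MeasurableSpace α]
    [NormedAddCommGroup F] [NormedSpace ℝ F] {ν : Measure α} {G : α → EuclideanSpace ℝ κ →L[ℝ] F}
    (hG : MemLp G 2 ν) (w : κ → ℝ) :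
    ∫ x, ‖G x ∘L Matrix.toEuclideanCLM (𝕜 := ℝ) (Matrix.diagonal w)‖ ^ 2 ∂ν ≤
      ∑ k, w k ^ 2 * ∫ x, ‖G x (EuclideanSpace.single k 1)‖ ^ 2 ∂ν := by
  have h_int (k : κ) : Integrable (fun x => w k ^ 2 * ‖G x (EuclideanSpace.single k 1)‖ ^ 2) ν :=
    ((memLp_clm_apply hG _).integrable_norm_pow two_ne_zero).const_mul _
  simp only [← integral_const_mul]
  rw [← integral_finsetSum _ fun k _ => h_int k]
  refine integral_mono_of_nonneg (.of_forall fun x => sq_nonneg _)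
    (integrable_finsetSum _ fun k _ => h_int k) (.of_forall fun x => ?_)
  refine (opNorm_sq_le_sum_orthonormalBasis (EuclideanSpace.basisFun κ ℝ) _).trans_eq ?_
  simp only [EuclideanSpace.basisFun_apply, ContinuousLinearMap.comp_apply,
    toEuclideanCLM_diagonal_single, map_smul, norm_smul, mul_pow, Real.norm_eq_abs, sq_abs]

end Diagonal

section PartialDerivative

variable {ι E F : Type*} [DecidableEq ι] [NormedAddCommGroup E] [NormedSpace ℝ E]
  [NormedAddCommGroup F] [NormedSpace ℝ F] {ψ : (ι → E) → F}

/-- The partial derivative at `z` of a function `ψ` of several variables in `E`, with respect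
to the variable of index `i`, as a linear map on `E`. -/
noncomputable def partialFDeriv (ψ : (ι → E) → F) (i : ι) (z : ι → E) : E →L[ℝ] F :=
  fderiv ℝ ψ z ∘L .single ℝ (fun _ => E) i

lemma partialFDeriv_apply (i : ι) (z : ι → E) (e : E) :
    partialFDeriv ψ i z e = fderiv ℝ ψ z (Pi.single i e) := rfl

lemma hasCompactSupport_partialFDeriv (hψ : HasCompactSupport ψ) (i : ι) :
    HasCompactSupport (partialFDeriv ψ i) :=
  (hψ.fderiv ℝ).comp_left (g := fun L => L ∘L .single ℝ (fun _ => E) i)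
    (ContinuousLinearMap.zero_comp _)

lemma fderiv_comp_update [Finite ι] (hψ : Differentiable ℝ ψ) (i : ι) (z : ι → E) (u : E) :
    fderiv ℝ (fun v => ψ (Function.update z i v)) u =
      partialFDeriv ψ i (Function.update z i u) := by
  cases nonempty_fintype ι
  refine ((hψ _).hasFDerivAt.comp u (hasFDerivAt_update z u)).fderiv.trans ?_
  ext e
  rw [partialFDeriv_apply, ContinuousLinearMap.comp_apply]
  congr 1
  ext k
  rcases eq_or_ne k i with rfl | hk <;> simp [*]

variable [Fintype ι]

lemma continuous_partialFDeriv (hψ : ContDiff ℝ 1 ψ) (i : ι) : Continuous (partialFDeriv ψ i) :=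
  (hψ.continuous_fderiv one_ne_zero).clm_comp continuous_const

lemma memLp_partialFDeriv [MeasurableSpace E] [BorelSpace E] [SecondCountableTopology E]
    {ν : Measure (ι → E)} [IsFiniteMeasureOnCompacts ν] {p : ℝ≥0∞} (hψ : ContDiff ℝ 1 ψ)
    (hψc : HasCompactSupport ψ) (i : ι) : MemLp (partialFDeriv ψ i) p ν :=
  (continuous_partialFDeriv hψ i).memLp_of_hasCompactSupport (hasCompactSupport_partialFDeriv hψc i)

end PartialDerivative

section NearDiagonal

/-- The set of configurations whose variables of index `i` and `j` are at distance at most `R`: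
the set `{|z_i - z_j| ≤ R}`. -/
def nearDiagonal {ι E : Type*} [Norm E] [Sub E] (i j : ι) (R : ℝ) : Set (ι → E) :=
  {z | ‖z i - z j‖ ≤ R}

variable {ι E F : Type*} [NormedAddCommGroup E]

lemma measurableSet_nearDiagonal [Countable ι] [MeasurableSpace E] [BorelSpace E]
    [SecondCountableTopology E] (i j : ι) (R : ℝ) :
    MeasurableSet (nearDiagonal i j R : Set (ι → E)) :=
  (isClosed_le (by fun_prop) continuous_const).measurableSet

variable [DecidableEq ι]

lemma update_preimage_nearDiagonal {i j : ι} (hij : i ≠ j) (z : ι → E) (R : ℝ) :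
    Function.update z i ⁻¹' nearDiagonal i j R = closedBall (z j) R := by
  ext u
  simp [nearDiagonal, hij.symm, dist_eq_norm]

variable [Fintype ι] [NormedAddCommGroup F] [InnerProductSpace ℝ F]

lemma eLpNorm_nearDiagonal_le_eLpNorm_partialFDeriv [NormedSpace ℝ E] [FiniteDimensional ℝ E]
    [MeasurableSpace E] [BorelSpace E] (μ : Measure E) [μ.IsAddHaarMeasure]
    {ψ : (ι → E) → F} (hψ : ContDiff ℝ 1 ψ) (hψc : HasCompactSupport ψ) {p : ℝ≥0} (hp : 1 ≤ p)
    (hpn : p < finrank ℝ E) {A : E →L[ℝ] E} (hA : A.det ≠ 0) {i j : ι} (hij : i ≠ j) {R : ℝ}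
    (hR : 0 ≤ R) :
    eLpNorm ψ p ((Measure.pi fun _ => μ).restrict (nearDiagonal i j R)) ≤
      ENNReal.ofReal (ballSobolevConst μ p * R * |A.det| ^ (-(finrank ℝ E : ℝ)⁻¹)) *
        eLpNorm (fun z => partialFDeriv ψ i z ∘L A) p (Measure.pi fun _ => μ) := by
  have h_meas : MeasurableSet (nearDiagonal i j R : Set (ι → E)) :=
    measurableSet_nearDiagonal i j R
  have h_cont : Continuous fun z => partialFDeriv ψ i z ∘L A :=
    (continuous_partialFDeriv hψ i).clm_comp continuous_const
  rw [← eLpNorm_indicator_eq_eLpNorm_restrict h_meas]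
  refine eLpNorm_le_of_eLpNorm_update_le (hψ.continuous.stronglyMeasurable.indicator h_meas)
    h_cont.stronglyMeasurable (zero_lt_one.trans_le hp).ne' i _ fun z => ?_
  have h_slice : (fun u => (nearDiagonal i j R).indicator ψ (Function.update z i u)) =
      (closedBall (z j) R).indicator fun u => ψ (Function.update z i u) := by
    rw [← update_preimage_nearDiagonal hij]
    rfl
  rw [h_slice, eLpNorm_indicator_eq_eLpNorm_restrict isClosed_closedBall.measurableSet]
  simp only [← fderiv_comp_update (hψ.differentiable one_ne_zero)]
  exact eLpNorm_closedBall_le_eLpNorm_fderiv_comp μ (hψ.comp (contDiff_update 1 z i))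
    (hψc.comp_isClosedEmbedding (isClosedEmbedding_update z i)) hp hpn hA (z j) hR

lemma setIntegral_nearDiagonal_norm_sq_le {κ : Type*} [Fintype κ] [DecidableEq κ]
    (hκ : 2 < Fintype.card κ) {ψ : (ι → EuclideanSpace ℝ κ) → F} (hψ : ContDiff ℝ 1 ψ)
    (hψc : HasCompactSupport ψ) {w : κ → ℝ} (hw : ∀ k, w k ≠ 0) {i j : ι} (hij : i ≠ j) {R : ℝ}
    (hR : 0 ≤ R) :
    ∫ z in nearDiagonal i j R, ‖ψ z‖ ^ 2 ≤
      (ballSobolevConst (volume : Measure (EuclideanSpace ℝ κ)) 2 * R *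
        |∏ k, w k| ^ (-(Fintype.card κ : ℝ)⁻¹)) ^ 2 *
          ∑ k, w k ^ 2 * ∫ z, ‖fderiv ℝ ψ z (Pi.single i (EuclideanSpace.single k 1))‖ ^ 2 := by
  set A := Matrix.toEuclideanCLM (𝕜 := ℝ) (Matrix.diagonal w)
  have h_det : A.det = ∏ k, w k := by rw [det_toEuclideanCLM, Matrix.det_diagonal]
  have h_memLp : MemLp (partialFDeriv ψ i) 2 := memLp_partialFDeriv hψ hψc i
  have h_memLp_comp : MemLp (fun z => partialFDeriv ψ i z ∘L A) 2 :=
    ((ContinuousLinearMap.compL ℝ (EuclideanSpace ℝ κ) (EuclideanSpace ℝ κ) F).flip A).comp_memLp'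
      h_memLp
  have h_const_nonneg := ballSobolevConst_nonneg (volume : Measure (EuclideanSpace ℝ κ)) 2
  have h_eLpNorm := eLpNorm_nearDiagonal_le_eLpNorm_partialFDeriv volume hψ hψc one_le_two
    (by simpa using hκ) (h_det ▸ Finset.prod_ne_zero_iff.2 fun k _ => hw k : A.det ≠ 0) hij hR
  rw [h_det, finrank_euclideanSpace] at h_eLpNorm
  refine (integral_norm_sq_le_of_eLpNorm_two_le hψ.continuous.aestronglyMeasurable h_memLp_comp
    (by positivity) h_eLpNorm).trans ?_
  exact mul_le_mul_of_nonneg_left (integral_comp_toEuclideanCLM_diagonal_sq_le h_memLp w)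
    (sq_nonneg _)

end NearDiagonal

theorem near_diagonal_mass_bound_general :
    ∃ C > (0 : ℝ), ∀ {ι F : Type*} [Fintype ι] [DecidableEq ι] [NormedAddCommGroup F]
      [InnerProductSpace ℝ F] {i j : ι}, i ≠ j → ∀ {ε : ℝ}, 0 < ε → ∀ {R : ℝ}, 0 ≤ R →
      ∀ {ψ : (ι → EuclideanSpace ℝ (Fin 3)) → F}, ContDiff ℝ 1 ψ → HasCompactSupport ψ →
        ∫ z in nearDiagonal i j R, ‖ψ z‖ ^ 2 ≤
          C * R ^ 2 * ε ^ (-(4 : ℝ) / 3) *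
            ((∫ z, ‖fderiv ℝ ψ z (Pi.single i (EuclideanSpace.single 0 1))‖ ^ 2) +
              ε ^ 2 * ∫ z, (‖fderiv ℝ ψ z (Pi.single i (EuclideanSpace.single 1 1))‖ ^ 2 +
                ‖fderiv ℝ ψ z (Pi.single i (EuclideanSpace.single 2 1))‖ ^ 2)) := by
  set K := ballSobolevConst (volume : Measure (EuclideanSpace ℝ (Fin 3))) 2
  refine ⟨K ^ 2 + 1, by positivity, fun {ι F} _ _ _ _ {i j} hij {ε} hε {R} hR {ψ} hψ hψc => ?_⟩
  have h_int (k : Fin 3) :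
      Integrable fun z => ‖fderiv ℝ ψ z (Pi.single i (EuclideanSpace.single k 1))‖ ^ 2 :=
    (memLp_clm_apply (memLp_partialFDeriv hψ hψc i) _).integrable_norm_pow two_ne_zero
  have h_det : (|∏ k, ![1, ε, ε] k| ^ (-(Fintype.card (Fin 3) : ℝ)⁻¹)) ^ 2 =
      ε ^ (-(4 : ℝ) / 3) := by
    have h_prod : |∏ k, ![1, ε, ε] k| = ε ^ (2 : ℝ) := by
      simp [Fin.prod_univ_three, abs_of_pos hε, sq]
    rw [h_prod, ← Real.rpow_mul hε.le, ← Real.rpow_mul_natCast hε.le, Fintype.card_fin]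
    norm_num
  have h_weighted := setIntegral_nearDiagonal_norm_sq_le (by simp) hψ hψc
    (w := ![1, ε, ε]) (by simp [Fin.forall_fin_succ, hε.ne']) hij hR
  rw [mul_pow, mul_pow, h_det, Fin.sum_univ_three] at h_weighted
  simp only [Matrix.cons_val, one_pow, one_mul, add_assoc, ← mul_add] at h_weighted
  rw [integral_add (h_int 1) (h_int 2)]
  refine h_weighted.trans ?_
  gcongr
  exact le_add_of_nonneg_right zero_le_one

/-- There is a universal constant `C` such that for every `N ≥ 2`, `ε ∈ (0,1]`, `R > 0` and every
smooth compactly supported `ψ` on `(ℝ³)^N`: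
`∫ 1_{|z₁-z₂| ≤ R} |ψ|² ≤ C R² ε^(-4/3) (‖∂_{x₁}ψ‖² + ε² ‖∇_{y₁}ψ‖²)`.  Here `z_j = (x_j, y_j)`
with `x_j` the `0`-th coordinate of the `j`-th factor `ℝ³` and `y_j` the coordinates `1, 2`. -/
theorem near_diagonal_mass_bound :
    ∃ C > (0:ℝ), ∀ N : ℕ, ∀ hN : 2 ≤ N, ∀ ε : ℝ, ε ∈ Set.Ioc (0:ℝ) 1 → ∀ R : ℝ, 0 < R →
      ∀ ψ : (Fin N → EuclideanSpace ℝ (Fin 3)) → ℂ, ContDiff ℝ (⊤ : ℕ∞) ψ → HasCompactSupport ψ →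
        (∫ z in {z : Fin N → EuclideanSpace ℝ (Fin 3) |
            ‖z ⟨0, by omega⟩ - z ⟨1, by omega⟩‖ ≤ R}, ‖ψ z‖ ^ 2) ≤
          C * R ^ 2 * ε ^ (-(4:ℝ)/3) *
            ((∫ z : Fin N → EuclideanSpace ℝ (Fin 3),
                ‖fderiv ℝ ψ z (Pi.single (⟨0, by omega⟩ : Fin N)
                  (EuclideanSpace.single (0 : Fin 3) (1:ℝ)))‖ ^ 2) +
              ε ^ 2 * ∫ z : Fin N → EuclideanSpace ℝ (Fin 3),
                (‖fderiv ℝ ψ z (Pi.single (⟨0, by omega⟩ : Fin N)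
                    (EuclideanSpace.single (1 : Fin 3) (1:ℝ)))‖ ^ 2 +
                  ‖fderiv ℝ ψ z (Pi.single (⟨0, by omega⟩ : Fin N)
                    (EuclideanSpace.single (2 : Fin 3) (1:ℝ)))‖ ^ 2)) := by
  obtain ⟨C, hC, h_bound⟩ := near_diagonal_mass_bound_general
  exact ⟨C, hC, fun N hN ε hε R hR ψ hψ hψc =>
    h_bound (by simp) hε.1 hR.le (hψ.of_le (by exact_mod_cast le_top)) hψc⟩
end
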